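/- arXiv:2203.06307 — 6 statements merged into one kernel-verified Lean document; each statement's English description precedes it below -/
import Mathlib

section
/- Let n be a positive integer, let f ∈ ℝ^n, and let θ, η, Dθ, Dη : {1,…,n}×{1,…,n} → ℝ be arbitrary real arrays. Then (1/2) Σ_{i,j,k=1}^n (f_i − f_j)² Dθ_{ij} η_{ki} + Σ_{i,j,k=1}^n (f_i − f_j)(f_i − f_k) Dη_{ij} θ_{ki} = (1/2) Σ_{i,j,k=1}^n (f_i − f_j)² ( Dθ_{ij} η_{ki} + Dη_{ij} θ_{ki} + Dη_{jk} θ_{ij} − Dη_{ki} θ_{jk} ). -/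
/-! With `a = f i - f j` and `b = f i - f k`, polarization gives
`2 a b = a² + b² - (f j - f k)²`. Multiplying by `Dη i j * θ k i` and summing, the three terms on the
right become the three `Dη θ` sums of the theorem after cyclic relabelling of `(i, j, k)`. -/

theorem sum_cyclic {n : ℕ} (F : Fin n → Fin n → Fin n → ℝ) :
    ∑ i, ∑ j, ∑ k, F i j k = ∑ i, ∑ j, ∑ k, F k i j := by
  rw [Finset.sum_comm]
  exact Finset.sum_congr rfl fun j _ => Finset.sum_comm

/-- For arbitrary real arrays `θ, η, Dθ, Dη` on `{1,…,n}²` and `f ∈ ℝⁿ`,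
`(1/2) Σ_{i,j,k} (f_i − f_j)² Dθ_{ij} η_{ki} + Σ_{i,j,k} (f_i − f_j)(f_i − f_k) Dη_{ij} θ_{ki}
  = (1/2) Σ_{i,j,k} (f_i − f_j)² ( Dθ_{ij} η_{ki} + Dη_{ij} θ_{ki} + Dη_{jk} θ_{ij} − Dη_{ki} θ_{jk} )`. -/
theorem stmt5 (n : ℕ) (hn : 0 < n) (f : Fin n → ℝ)
    (θ η Dθ Dη : Fin n → Fin n → ℝ) :
    (1/2) * (∑ i, ∑ j, ∑ k, (f i - f j)^2 * Dθ i j * η k i)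
      + (∑ i, ∑ j, ∑ k, (f i - f j) * (f i - f k) * Dη i j * θ k i) =
    (1/2) * ∑ i, ∑ j, ∑ k, (f i - f j)^2 *
      (Dθ i j * η k i + Dη i j * θ k i + Dη j k * θ i j - Dη k i * θ j k) := by
  have h₁ := sum_cyclic fun i j k => (f i - f j)^2 * (Dη j k * θ i j)
  have h₂ := (sum_cyclic fun i j k => (f i - f j)^2 * (Dη k i * θ j k)).trans (sum_cyclic _)
  have h₃ : ∑ i, ∑ j, ∑ k, (f i - f j) * (f i - f k) * Dη i j * θ k i =
      (1/2) * ∑ i, ∑ j, ∑ k, ((f i - f j)^2 * (Dη i j * θ k i)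
        + (f k - f i)^2 * (Dη i j * θ k i) - (f j - f k)^2 * (Dη i j * θ k i)) := by
    simp only [Finset.mul_sum]
    refine Finset.sum_congr rfl fun i _ => Finset.sum_congr rfl fun j _ =>
      Finset.sum_congr rfl fun k _ => ?_
    ring
  rw [h₃]
  simp only [mul_add, mul_sub, Finset.sum_add_distrib, Finset.sum_sub_distrib, mul_assoc]
    at h₁ h₂ ⊢
  rw [h₁, h₂]
  ring
end

section
/- Let G = K₂ be the complete graph on the two vertices {1,2}, let θ : (0,∞)² → (0,∞) be C¹ and symmetric, and let E : (0,∞)² → ℝ be C². Then for every p = (p₁,p₂) ∈ (0,∞)² and f ∈ ℝ²: Γ₂(p,f,f) = (f₁ − f₂)² [ −(1/2)( ∂θ/∂p₁ − ∂θ/∂p₂ ) η₁₂ + ( ∂η₁₂/∂p₁ − ∂η₁₂/∂p₂ ) θ(p₁,p₂) ], and consequently Γ₂(p,f,f) = θ(p₁,p₂)(f₁ − f₂)² · [ (1/2)( ∂θ/∂p₁ − ∂θ/∂p₂ )( ∂E/∂p₁ − ∂E/∂p₂ ) + θ(p₁,p₂)( ∂²E/∂p₁² − 2 ∂²E/∂p₁∂p₂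 + ∂²E/∂p₂² ) ], where all derivatives are evaluated at (p₁,p₂). -/
/-!
On `K₂` only the four index triples `(i, j, k)` with `i ≠ j` contribute to `Γ₂`. With
`η₂₁ = -η₁₂` and `θ₂₁ = θ₁₂` (symmetry of `θ`), summing them gives the first formula.
The second one follows from the product rule for `η₁₂ = θ₁₂ (∂₁E - ∂₂E)` and the equality of
the mixed second derivatives of the `C²` function `E`. The analytic input is `pd_eq_fderiv`, which
turns coordinate derivatives into values of the Fréchet derivative wherever the latter exists,
and `pd_pd_comm`, the symmetry of second derivatives in terms of `pd`.
-/

open Finset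

/-- Partial derivative of `F : (V → ℝ) → ℝ` in the `i`-th coordinate at `p`. -/
noncomputable def pd {V : Type*} [DecidableEq V] (F : (V → ℝ) → ℝ) (i : V) (p : V → ℝ) : ℝ :=
  deriv (fun s => F (Function.update p i s)) (p i)

/-- The edge weight `θ_{ij}(p) = θ(p_i, p_j)` if `ij` is an edge, and `0` otherwise. -/
noncomputable def thM {V : Type*} (A : V → V → Prop) [DecidableRel A]
    (θ : ℝ → ℝ → ℝ) (p : V → ℝ) (i j : V) : ℝ :=
  if A i j then θ (p i) (p j) else 0

/-- `η_{ij}(p) = θ_{ij}(p) (∂E/∂p_i − ∂E/∂p_j)`. -/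
noncomputable def etaM {V : Type*} [DecidableEq V] (A : V → V → Prop) [DecidableRel A]
    (θ : ℝ → ℝ → ℝ) (E : (V → ℝ) → ℝ) (p : V → ℝ) (i j : V) : ℝ :=
  thM A θ p i j * (pd E i p - pd E j p)

/-- `Γ₁(p,f,f) = Σ_{i,j} θ_{ij}(p) (f_i − f_j)²`. -/
noncomputable def Gamma1 {V : Type*} [Fintype V] (A : V → V → Prop) [DecidableRel A]
    (θ : ℝ → ℝ → ℝ) (p f : V → ℝ) : ℝ :=
  ∑ i, ∑ j, thM A θ p i j * (f i - f j)^2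

/-- `Γ₂(p,f,f)`, the mean-field information Hessian quadratic form. -/
noncomputable def Gamma2 {V : Type*} [Fintype V] [DecidableEq V] (A : V → V → Prop)
    [DecidableRel A] (θ : ℝ → ℝ → ℝ) (E : (V → ℝ) → ℝ) (p f : V → ℝ) : ℝ :=
  (1/2) * ∑ i, ∑ j, ∑ k, (f i - f j)^2 *
    (pd (fun q => thM A θ q i j) i p * etaM A θ E p k i
      + pd (fun q => etaM A θ E q i j) i p * thM A θ p k i
      + pd (fun q => etaM A θ E q j k) j p * thM A θ p i j
      - pd (fun q => etaM A θ E q k i) k p * thM A θ p j k)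

/-- The complete graph `K₂` on two vertices. -/
def K2adj : Fin 2 → Fin 2 → Prop := fun i j => i ≠ j

instance : DecidableRel K2adj := fun i j => inferInstanceAs (Decidable (i ≠ j))

section PartialDerivatives

variable {V : Type*} [Fintype V] [DecidableEq V]

theorem hasDerivAt_pd {F : (V → ℝ) → ℝ} {p : V → ℝ} (hF : DifferentiableAt ℝ F p) (i : V) :
    HasDerivAt (fun s => F (Function.update p i s)) (fderiv ℝ F p (Pi.single i 1)) (p i) := by
  have h : HasFDerivAt F (fderiv ℝ F p) (Function.update p i (p i)) := by
    rw [Function.update_eq_self]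
    exact hF.hasFDerivAt
  exact h.comp_hasDerivAt (p i) (hasDerivAt_update p i (p i))

theorem pd_eq_fderiv {F : (V → ℝ) → ℝ} {p : V → ℝ} (hF : DifferentiableAt ℝ F p) (i : V) :
    pd F i p = fderiv ℝ F p (Pi.single i 1) :=
  (hasDerivAt_pd hF i).deriv

theorem pd_mul {F G : (V → ℝ) → ℝ} {p : V → ℝ} (hF : DifferentiableAt ℝ F p)
    (hG : DifferentiableAt ℝ G p) (i : V) :
    pd (fun q => F q * G q) i p = pd F i p * G p + F p * pd G i p := by
  rw [pd_eq_fderiv (hF.fun_mul hG), pd_eq_fderiv hF, pd_eq_fderiv hG, fderiv_fun_mul hF hG]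
  simp
  ring

theorem pd_sub {F G : (V → ℝ) → ℝ} {p : V → ℝ} (hF : DifferentiableAt ℝ F p)
    (hG : DifferentiableAt ℝ G p) (i : V) :
    pd (fun q => F q - G q) i p = pd F i p - pd G i p := by
  rw [pd_eq_fderiv (hF.fun_sub hG), pd_eq_fderiv hF, pd_eq_fderiv hG, fderiv_fun_sub hF hG]
  simp

theorem pd_neg {V : Type*} [DecidableEq V] (F : (V → ℝ) → ℝ) (i : V) (p : V → ℝ) :
    pd (fun q => -F q) i p = -pd F i p := by
  unfold pd
  exact deriv.fun_neg

/-- Near a point of `C²` regularity, the partial derivative is the Fréchet derivative in a fixed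
direction; the neighbourhood is needed in order to differentiate once more. -/
theorem pd_eventuallyEq_fderiv {E : (V → ℝ) → ℝ} {p : V → ℝ} (hE : ContDiffAt ℝ 2 E p) (i : V) :
    (fun q => pd E i q) =ᶠ[nhds p] fun q => fderiv ℝ E q (Pi.single i 1) := by
  filter_upwards [hE.eventually (by simp)] with q hq
  exact pd_eq_fderiv (hq.differentiableAt (by simp)) i

theorem differentiableAt_fderiv {V : Type*} [Fintype V] {E : (V → ℝ) → ℝ} {p : V → ℝ} (hE : ContDiffAt ℝ 2 E p) :
    DifferentiableAt ℝ (fderiv ℝ E) p :=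
  (hE.fderiv_right (m := 1) (by norm_num)).differentiableAt (by simp)

theorem differentiableAt_pd {E : (V → ℝ) → ℝ} {p : V → ℝ} (hE : ContDiffAt ℝ 2 E p) (i : V) :
    DifferentiableAt ℝ (fun q => pd E i q) p :=
  ((differentiableAt_fderiv hE).clm_apply (differentiableAt_const _)).congr_of_eventuallyEq
    (pd_eventuallyEq_fderiv hE i)

theorem pd_pd_eq {E : (V → ℝ) → ℝ} {p : V → ℝ} (hE : ContDiffAt ℝ 2 E p) (i j : V) :
    pd (fun q => pd E j q) i p = fderiv ℝ (fderiv ℝ E) p (Pi.single i 1) (Pi.single j 1) := by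
  rw [pd_eq_fderiv (differentiableAt_pd hE j), (pd_eventuallyEq_fderiv hE j).fderiv_eq,
    fderiv_clm_apply (differentiableAt_fderiv hE) (differentiableAt_const _)]
  simp

theorem pd_pd_comm {E : (V → ℝ) → ℝ} {p : V → ℝ} (hE : ContDiffAt ℝ 2 E p) (i j : V) :
    pd (fun q => pd E j q) i p = pd (fun q => pd E i q) j p := by
  rw [pd_pd_eq hE, pd_pd_eq hE]
  exact hE.isSymmSndFDerivAt (by simp) _ _

end PartialDerivatives

theorem thM_K2_self (θ : ℝ → ℝ → ℝ) (q : Fin 2 → ℝ) (i : Fin 2) : thM K2adj θ q i i = 0 := by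
  simp [thM, K2adj]

theorem thM_K2_zero_one (θ : ℝ → ℝ → ℝ) (q : Fin 2 → ℝ) :
    thM K2adj θ q 0 1 = θ (q 0) (q 1) := by
  simp [thM, K2adj]

theorem thM_K2_one_zero {θ : ℝ → ℝ → ℝ} (hθsym : ∀ s t, θ s t = θ t s) (q : Fin 2 → ℝ) :
    thM K2adj θ q 1 0 = thM K2adj θ q 0 1 := by
  simp [thM, K2adj, hθsym (q 1) (q 0)]

theorem etaM_K2_self (θ : ℝ → ℝ → ℝ) (E : (Fin 2 → ℝ) → ℝ) (q : Fin 2 → ℝ) (i : Fin 2) :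
    etaM K2adj θ E q i i = 0 := by
  simp [etaM]

theorem etaM_K2_one_zero {θ : ℝ → ℝ → ℝ} (hθsym : ∀ s t, θ s t = θ t s)
    (E : (Fin 2 → ℝ) → ℝ) (q : Fin 2 → ℝ) :
    etaM K2adj θ E q 1 0 = -etaM K2adj θ E q 0 1 := by
  simp only [etaM, thM_K2_one_zero hθsym]
  ring

/-- The purely combinatorial reduction of `Γ₂` on `K₂`; no differentiability is involved, since
`pd` commutes with negation even at junk values. -/
theorem Gamma2_K2 {θ : ℝ → ℝ → ℝ} (hθsym : ∀ s t, θ s t = θ t s)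
    (E : (Fin 2 → ℝ) → ℝ) (p f : Fin 2 → ℝ) :
    Gamma2 K2adj θ E p f =
      (f 0 - f 1)^2 *
        (-(1/2) * (pd (fun q => thM K2adj θ q 0 1) 0 p - pd (fun q => thM K2adj θ q 0 1) 1 p)
            * etaM K2adj θ E p 0 1
          + (pd (fun q => etaM K2adj θ E q 0 1) 0 p
              - pd (fun q => etaM K2adj θ E q 0 1) 1 p) * θ (p 0) (p 1)) := by
  simp only [Gamma2, Fin.sum_univ_two, thM_K2_self, etaM_K2_self, thM_K2_one_zero hθsym,
    etaM_K2_one_zero hθsym, pd_neg]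
  rw [thM_K2_zero_one θ p]
  ring

theorem differentiableAt_thM_K2 {θ : ℝ → ℝ → ℝ}
    (hθ : ContDiffOn ℝ 1 (Function.uncurry θ) {q : ℝ × ℝ | 0 < q.1 ∧ 0 < q.2})
    {p : Fin 2 → ℝ} (hp : ∀ i, 0 < p i) :
    DifferentiableAt ℝ (fun q => thM K2adj θ q 0 1) p := by
  have hopen : IsOpen {q : ℝ × ℝ | 0 < q.1 ∧ 0 < q.2} :=
    (isOpen_lt continuous_const continuous_fst).inter (isOpen_lt continuous_const continuous_snd)
  have h : DifferentiableAt ℝ (Function.uncurry θ) (p 0, p 1) :=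
    (hθ.contDiffAt (hopen.mem_nhds ⟨hp 0, hp 1⟩)).differentiableAt (by simp)
  have hproj : DifferentiableAt ℝ (fun q : Fin 2 → ℝ => (q 0, q 1)) p := by fun_prop
  simp only [thM_K2_zero_one]
  exact DifferentiableAt.comp (g := Function.uncurry θ) p h hproj

/-- on `K₂`, the Hessian quadratic form reduces to the stated two expressions. -/
theorem stmt9 (θ : ℝ → ℝ → ℝ)
    (hθ : ContDiffOn ℝ 1 (Function.uncurry θ) {q : ℝ × ℝ | 0 < q.1 ∧ 0 < q.2})
    (hθsym : ∀ s t, θ s t = θ t s)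
    (hθpos : ∀ s t : ℝ, 0 < s → 0 < t → 0 < θ s t)
    (E : (Fin 2 → ℝ) → ℝ)
    (hE : ContDiffOn ℝ 2 E {p : Fin 2 → ℝ | ∀ i, 0 < p i})
    (p f : Fin 2 → ℝ) (hp : ∀ i, 0 < p i) :
    Gamma2 K2adj θ E p f =
      (f 0 - f 1)^2 *
        (-(1/2) * (pd (fun q => thM K2adj θ q 0 1) 0 p - pd (fun q => thM K2adj θ q 0 1) 1 p)
            * etaM K2adj θ E p 0 1
          + (pd (fun q => etaM K2adj θ E q 0 1) 0 p
              - pd (fun q => etaM K2adj θ E q 0 1) 1 p) * θ (p 0) (p 1))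
    ∧ Gamma2 K2adj θ E p f =
      θ (p 0) (p 1) * (f 0 - f 1)^2 *
        ((1/2) * (pd (fun q => thM K2adj θ q 0 1) 0 p - pd (fun q => thM K2adj θ q 0 1) 1 p)
            * (pd E 0 p - pd E 1 p)
          + θ (p 0) (p 1) *
            (pd (fun q => pd E 0 q) 0 p - 2 * pd (fun q => pd E 0 q) 1 p
              + pd (fun q => pd E 1 q) 1 p)) := by
  have hopen : IsOpen {q : Fin 2 → ℝ | ∀ i, 0 < q i} := by
    simp only [Set.ofPred_forall]
    exact isOpen_iInter_of_finite fun i => isOpen_lt continuous_const (continuous_apply i)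
  have hEp : ContDiffAt ℝ 2 E p := hE.contDiffAt (hopen.mem_nhds hp)
  have hth := differentiableAt_thM_K2 hθ hp
  have hE0 := differentiableAt_pd hEp 0
  have hE1 := differentiableAt_pd hEp 1
  have heta (i : Fin 2) : pd (fun q => etaM K2adj θ E q 0 1) i p =
      pd (fun q => thM K2adj θ q 0 1) i p * (pd E 0 p - pd E 1 p) + θ (p 0) (p 1) *
        (pd (fun q => pd E 0 q) i p - pd (fun q => pd E 1 q) i p) := by
    rw [← pd_sub hE0 hE1, ← thM_K2_zero_one θ p]
    exact pd_mul hth (hE0.fun_sub hE1) i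
  refine ⟨Gamma2_K2 hθsym E p f, ?_⟩
  rw [Gamma2_K2 hθsym E p f, heta 0, heta 1, pd_pd_comm hEp 0 1, etaM, thM_K2_zero_one θ p]
  ring
end

section
/- Let E : (0,1) → ℝ be C² with E(x) = E(1−x) for all x ∈ (0,1) and E''(x) > 0 for all x ∈ (0,1), and let θ : (0,1) → (0,∞) be C¹. Define κ(x) = (1/2) θ'(x) E'(x) + θ(x) E''(x). Then for a constant C ∈ ℝ, one has κ(x) = C for all x ∈ (0,1) if and only if θ(x) = 2C (E(x) − E(1/2)) / E'(x)² for all x ∈ (0,1) with x ≠ 1/2. -/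
/-!
Put `g = θ E'² - 2C (E - E(1/2))`. Then `g' = 2 E' (κ - C)` on `(0,1)`, and `g(1/2) = 0`
because symmetry forces `E'(1/2) = 0`. If `κ = C`, then `g` is constant, hence zero, and one
divides by `E'²`, which is nonzero off `1/2` since `E'` is strictly increasing. Conversely the
formula says `g = 0` on `(0,1)`, so `E' (κ - C) = 0`; this gives `κ = C` off `1/2`, and at `1/2`
by continuity of `κ`.
-/

/-- on `K₂` parametrized by `x ∈ (0,1)`, for a symmetric strictly convex C²
energy `E` and a C¹ positive weight `θ`, the curvature
`κ(x) = (1/2)θ'(x)E'(x) + θ(x)E''(x)` is a constant `C` on `(0,1)` iff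
`θ(x) = 2C(E(x) − E(1/2))/E'(x)²` for all `x ∈ (0,1)`, `x ≠ 1/2`. -/
theorem stmt10 (E θ : ℝ → ℝ) (C : ℝ)
    (hE : ContDiffOn ℝ 2 E (Set.Ioo 0 1))
    (hEsym : ∀ x ∈ Set.Ioo (0:ℝ) 1, E x = E (1 - x))
    (hEconv : ∀ x ∈ Set.Ioo (0:ℝ) 1, 0 < deriv (deriv E) x)
    (hθ : ContDiffOn ℝ 1 θ (Set.Ioo 0 1))
    (hθpos : ∀ x ∈ Set.Ioo (0:ℝ) 1, 0 < θ x) :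
    (∀ x ∈ Set.Ioo (0:ℝ) 1,
        (1/2) * deriv θ x * deriv E x + θ x * deriv (deriv E) x = C)
    ↔ (∀ x ∈ Set.Ioo (0:ℝ) 1, x ≠ 1/2 →
        θ x = 2 * C * (E x - E (1/2)) / (deriv E x)^2) := by
  have hopen : IsOpen (Set.Ioo (0:ℝ) 1) := isOpen_Ioo
  have hhalf : (1/2:ℝ) ∈ Set.Ioo (0:ℝ) 1 := by constructor <;> norm_num
  have hE' : ContDiffOn ℝ 1 (deriv E) (Set.Ioo 0 1) :=
    hE.deriv_of_isOpen hopen (by norm_num)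
  have hE'' : ContinuousOn (deriv (deriv E)) (Set.Ioo 0 1) :=
    hE'.continuousOn_deriv_of_isOpen hopen le_rfl
  have hθ' : ContinuousOn (deriv θ) (Set.Ioo 0 1) :=
    hθ.continuousOn_deriv_of_isOpen hopen le_rfl
  have dE : ∀ x ∈ Set.Ioo (0:ℝ) 1, HasDerivAt E (deriv E x) x := fun x hx =>
    ((hE.differentiableOn (by norm_num)).differentiableAt (hopen.mem_nhds hx)).hasDerivAt
  have dE' : ∀ x ∈ Set.Ioo (0:ℝ) 1, HasDerivAt (deriv E) (deriv (deriv E) x) x := fun x hx =>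
    ((hE'.differentiableOn (by norm_num)).differentiableAt (hopen.mem_nhds hx)).hasDerivAt
  have dθ : ∀ x ∈ Set.Ioo (0:ℝ) 1, HasDerivAt θ (deriv θ x) x := fun x hx =>
    ((hθ.differentiableOn (by norm_num)).differentiableAt (hopen.mem_nhds hx)).hasDerivAt
  have hE'half : deriv E (1/2) = 0 := by
    have h1 : E =ᶠ[nhds (1/2)] fun x => E (1 - x) := by
      filter_upwards [hopen.mem_nhds hhalf] with x hx using hEsym x hx
    have h2 := h1.deriv_eq
    rw [deriv_comp_const_sub, show (1 - 1/2 : ℝ) = 1/2 by norm_num] at h2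
    linarith
  have hmono : StrictMonoOn (deriv E) (Set.Ioo 0 1) := by
    apply strictMonoOn_of_deriv_pos (convex_Ioo 0 1) hE'.continuousOn
    rw [interior_Ioo]
    exact hEconv
  have hne : ∀ x ∈ Set.Ioo (0:ℝ) 1, x ≠ 1/2 → deriv E x ≠ 0 := fun x hx hxne h =>
    hxne (hmono.injOn hx hhalf (h.trans hE'half.symm))
  set g : ℝ → ℝ := fun x => θ x * (deriv E x)^2 - 2 * C * (E x - E (1/2)) with hg
  have dg : ∀ x ∈ Set.Ioo (0:ℝ) 1, HasDerivAt g
      (2 * deriv E x * ((1/2) * deriv θ x * deriv E x + θ x * deriv (deriv E) x - C)) x := by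
    intro x hx
    have h := ((dθ x hx).mul ((dE' x hx).pow 2)).sub
      (((dE x hx).sub_const (E (1/2))).const_mul (2 * C))
    refine HasDerivAt.congr_deriv (f := g) h ?_
    simp only [Pi.pow_apply]
    push_cast
    ring
  have hghalf : g (1/2) = 0 := by simp only [hg, hE'half]; ring
  constructor
  · intro hκ x hx hxne
    have hconst : g x = g (1/2) := by
      apply hopen.is_const_of_deriv_eq_zero isPreconnected_Ioo
        (fun y hy => (dg y hy).differentiableAt.differentiableWithinAt) _ hx hhalf
      intro y hy
      rw [(dg y hy).deriv, hκ y hy]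
      simp
    rw [hghalf] at hconst
    rw [eq_div_iff (pow_ne_zero 2 (hne x hx hxne))]
    exact sub_eq_zero.mp hconst
  · intro hform
    have hg0 : ∀ x ∈ Set.Ioo (0:ℝ) 1, g x = 0 := by
      intro x hx
      by_cases hxh : x = 1/2
      · rw [hxh, hghalf]
      · have h := hform x hx hxh
        rw [eq_div_iff (pow_ne_zero 2 (hne x hx hxh))] at h
        exact sub_eq_zero.mpr h
    have hoff : ∀ x ∈ Set.Ioo (0:ℝ) 1, x ≠ 1/2 →
        (1/2) * deriv θ x * deriv E x + θ x * deriv (deriv E) x = C := by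
      intro x hx hxh
      have h0 : g =ᶠ[nhds x] fun _ => (0:ℝ) := by
        filter_upwards [hopen.mem_nhds hx] with y hy using hg0 y hy
      have h1 := h0.deriv_eq
      rw [(dg x hx).deriv, deriv_const] at h1
      have h2 := (mul_eq_zero.mp h1).resolve_left (mul_ne_zero two_ne_zero (hne x hx hxh))
      linarith
    intro x hx
    by_cases hxh : x = 1/2
    · -- `E'` vanishes here, so the value of `κ` is recovered as a limit along `y ≠ 1/2`.
      subst hxh
      have hcont : ContinuousOn
          (fun x => (1/2) * deriv θ x * deriv E x + θ x * deriv (deriv E) x)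
          (Set.Ioo (0:ℝ) 1) :=
        ((continuousOn_const.mul hθ').mul hE'.continuousOn).add (hθ.continuousOn.mul hE'')
      have hlim := ((hcont.continuousAt (hopen.mem_nhds hx)).tendsto).mono_left
        (nhdsWithin_le_nhds (s := {(1/2:ℝ)}ᶜ))
      refine tendsto_nhds_unique hlim (tendsto_const_nhds.congr' ?_)
      filter_upwards [nhdsWithin_le_nhds (hopen.mem_nhds hx), self_mem_nhdsWithin] with y hy hyne
      exact (hoff y hy hyne).symm
    · exact hoff x hx hxh
end

section
/- Let E : [0,1] → ℝ be continuous on [0,1], C² on (0,1), with E(x) = E(1−x) for all x and E''(x) > 0 on (0,1). Let θ : (0,1) → (0,∞) be C¹ with θ(x) = θ(1−x) for all x, and suppose the improper integral ∫₀¹ θ(x)^{−1/2} dx is finite. If κ₀ > 0 is such that (1/2) θ'(x) E'(x) + θ(x) E''(x) ≥ κ₀ for all x ∈ (0,1), then κ₀ · ( ∫₀¹ θ(x)^{−1/2} dx )² ≤ 8 ( E(1) − E(1/2) ). -/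
/-!
Put `F x = ∫_{1/2}^x θ^{-1/2}`, the arc length from the midpoint, so `F' = θ^{-1/2}` on `(0,1)`.
The function `√θ E'` has derivative `θ^{-1/2} ((1/2) θ' E' + θ E'') ≥ κ₀ F'`, and it vanishes at
`1/2` because `E` is symmetric; hence `√θ E' ≥ κ₀ F` on `[1/2, 1)`. Dividing by `√θ` gives
`E' ≥ κ₀ F F' = (κ₀ F² / 2)'`, so `E 1 - E (1/2) ≥ κ₀ (F 1)² / 2`; continuity of `E` and
integrability of `θ^{-1/2}` are what make the endpoint `1` admissible. By the symmetry of `θ`,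
`F 1` is half of the full integral, which yields the constant `8`.
-/

open MeasureTheory Set

/-- on `K₂`, if the curvature `(1/2)θ'E' + θE''` is bounded below by `κ₀ > 0`
on `(0,1)`, then `κ₀ (∫₀¹ θ(x)^{−1/2} dx)² ≤ 8 (E(1) − E(1/2))`. -/
theorem stmt11 (E θ : ℝ → ℝ) (κ₀ : ℝ)
    (hEc : ContinuousOn E (Set.Icc 0 1))
    (hE : ContDiffOn ℝ 2 E (Set.Ioo 0 1))
    (hEsym : ∀ x ∈ Set.Icc (0:ℝ) 1, E x = E (1 - x))
    (hEconv : ∀ x ∈ Set.Ioo (0:ℝ) 1, 0 < deriv (deriv E) x)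
    (hθ : ContDiffOn ℝ 1 θ (Set.Ioo 0 1))
    (hθpos : ∀ x ∈ Set.Ioo (0:ℝ) 1, 0 < θ x)
    (hθsym : ∀ x ∈ Set.Ioo (0:ℝ) 1, θ x = θ (1 - x))
    (hint : IntegrableOn (fun x => 1 / Real.sqrt (θ x)) (Set.Ioo 0 1))
    (hκ₀ : 0 < κ₀)
    (hbound : ∀ x ∈ Set.Ioo (0:ℝ) 1,
        κ₀ ≤ (1/2) * deriv θ x * deriv E x + θ x * deriv (deriv E) x) :
    κ₀ * (∫ x in Set.Ioo (0:ℝ) 1, 1 / Real.sqrt (θ x))^2 ≤ 8 * (E 1 - E (1/2)) := by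
  have hopen : IsOpen (Ioo (0:ℝ) 1) := isOpen_Ioo
  set g : ℝ → ℝ := fun x => 1 / Real.sqrt (θ x) with hg
  set F : ℝ → ℝ := fun x => ∫ t in (1/2:ℝ)..x, g t with hF
  have hθd : ∀ x ∈ Ioo (0:ℝ) 1, HasDerivAt θ (deriv θ x) x := fun x hx =>
    ((hθ.differentiableOn (by norm_num)).differentiableAt (hopen.mem_nhds hx)).hasDerivAt
  have hEd : ∀ x ∈ Ioo (0:ℝ) 1, HasDerivAt E (deriv E x) x := fun x hx =>
    ((hE.differentiableOn (by norm_num)).differentiableAt (hopen.mem_nhds hx)).hasDerivAt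
  have hEdd : ∀ x ∈ Ioo (0:ℝ) 1, HasDerivAt (deriv E) (deriv (deriv E) x) x := fun x hx =>
    (((hE.deriv_of_isOpen (m := 1) hopen (by norm_num)).differentiableOn
      (by norm_num)).differentiableAt (hopen.mem_nhds hx)).hasDerivAt
  have hgc : ContinuousOn g (Ioo 0 1) :=
    continuousOn_const.div hθ.continuousOn.sqrt
      fun x hx => (Real.sqrt_pos.2 (hθpos x hx)).ne'
  have hgi : IntervalIntegrable g volume 0 1 := by
    rw [intervalIntegrable_iff_integrableOn_Ioo_of_le zero_le_one]
    exact hint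
  have hsub : ∀ a ∈ Icc (0:ℝ) 1, ∀ b ∈ Icc (0:ℝ) 1, IntervalIntegrable g volume a b := by
    intro a ha b hb
    refine hgi.mono_set ?_
    rw [uIcc_of_le (zero_le_one (α := ℝ))]
    exact uIcc_subset_Icc ha hb
  have hFd : ∀ x ∈ Ioo (0:ℝ) 1, HasDerivAt F (g x) x := fun x hx =>
    intervalIntegral.integral_hasDerivAt_right
      (hsub (1/2) (by norm_num) x (Ioo_subset_Icc_self hx))
      (hgc.stronglyMeasurableAtFilter hopen x hx) (hgc.continuousAt (hopen.mem_nhds hx))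
  have hFc : ContinuousOn F (Icc (1/2) 1) := by
    have h := intervalIntegral.continuousOn_primitive_interval (μ := volume) (f := g)
      (a := 1/2) (b := 1)
      ((intervalIntegrable_iff' (by simp)).1 (hsub (1/2) (by norm_num) 1 (by norm_num)))
    rwa [uIcc_of_le (by norm_num : (1/2:ℝ) ≤ 1)] at h
  have hE0 : deriv E (1/2) = 0 := by
    have h1 : E =ᶠ[nhds (1/2)] fun x => E (1 - x) := by
      filter_upwards [hopen.mem_nhds (show (1/2:ℝ) ∈ Ioo 0 1 by norm_num)] with x hx
      exact hEsym x (Ioo_subset_Icc_self hx)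
    have h2 := h1.deriv_eq
    rw [deriv_comp_const_sub, show (1:ℝ) - 1/2 = 1/2 by norm_num] at h2
    linarith
  have hFhalf : F (1/2) = 0 := intervalIntegral.integral_same
  have hGd : ∀ x ∈ Ioo (0:ℝ) 1, HasDerivAt (fun x => √(θ x) * deriv E x - κ₀ * F x)
      (deriv θ x / (2 * √(θ x)) * deriv E x + √(θ x) * deriv (deriv E) x - κ₀ * g x) x :=
    fun x hx => (((hθd x hx).sqrt (hθpos x hx).ne').mul (hEdd x hx)).sub
      ((hFd x hx).const_mul κ₀)
  have hGmono : MonotoneOn (fun x => √(θ x) * deriv E x - κ₀ * F x) (Ico (1/2) 1) := by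
    refine monotoneOn_of_hasDerivWithinAt_nonneg (convex_Ico _ _)
      (f' := fun x => deriv θ x / (2 * √(θ x)) * deriv E x + √(θ x) * deriv (deriv E) x
        - κ₀ * g x) ?_ ?_ ?_
    · intro x hx
      exact (hGd x ⟨by linarith [hx.1], hx.2⟩).continuousAt.continuousWithinAt
    · intro x hx
      rw [interior_Ico] at hx
      exact (hGd x ⟨by linarith [hx.1], hx.2⟩).hasDerivWithinAt
    · intro x hx
      rw [interior_Ico] at hx
      have hx' : x ∈ Ioo (0:ℝ) 1 := ⟨by linarith [hx.1], hx.2⟩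
      have hs := Real.sqrt_pos.2 (hθpos x hx')
      have hss := Real.mul_self_sqrt (hθpos x hx').le
      have hb := hbound x hx'
      have : deriv θ x / (2 * √(θ x)) * deriv E x + √(θ x) * deriv (deriv E) x - κ₀ * g x
          = ((1/2) * deriv θ x * deriv E x + (√(θ x) * √(θ x)) * deriv (deriv E) x - κ₀)
            / √(θ x) := by
        simp only [hg]
        field_simp
      rw [this, hss]
      exact div_nonneg (by linarith) hs.le
  have hHmono : MonotoneOn (fun x => E x - κ₀ / 2 * F x ^ 2) (Icc (1/2) 1) := by
    refine monotoneOn_of_hasDerivWithinAt_nonneg (convex_Icc _ _)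
      (f' := fun x => deriv E x - κ₀ / 2 * (2 * F x * g x)) ?_ ?_ ?_
    · exact (hEc.mono (Icc_subset_Icc_left (by norm_num))).sub
        (continuousOn_const.mul (hFc.pow 2))
    · intro x hx
      rw [interior_Icc] at hx
      have hx' : x ∈ Ioo (0:ℝ) 1 := ⟨by linarith [hx.1], hx.2⟩
      have h := (hEd x hx').sub (((hFd x hx').pow 2).const_mul (κ₀ / 2))
      simp only [Nat.cast_ofNat, Nat.add_one_sub_one, pow_one] at h
      exact h.hasDerivWithinAt
    · intro x hx
      rw [interior_Icc] at hx
      have hx' : x ∈ Ioo (0:ℝ) 1 := ⟨by linarith [hx.1], hx.2⟩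
      have hs := Real.sqrt_pos.2 (hθpos x hx')
      have h := hGmono (show (1/2:ℝ) ∈ Ico (1/2) 1 by norm_num) ⟨hx.1.le, hx.2⟩ hx.1.le
      simp only [hE0, hFhalf, mul_zero, sub_zero] at h
      have : deriv E x - κ₀ / 2 * (2 * F x * g x)
          = (√(θ x) * deriv E x - κ₀ * F x) / √(θ x) := by
        simp only [hg]
        field_simp
      rw [this]
      exact div_nonneg h hs.le
  have hfinal := hHmono (show (1/2:ℝ) ∈ Icc (1/2) 1 by norm_num)
    (show (1:ℝ) ∈ Icc (1/2) 1 by norm_num) (by norm_num)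
  simp only [hFhalf] at hfinal
  have hI : ∫ x in Ioo (0:ℝ) 1, g x = 2 * F 1 := by
    rw [← integral_Ioc_eq_integral_Ioo, ← intervalIntegral.integral_of_le zero_le_one,
      ← intervalIntegral.integral_add_adjacent_intervals
        (hsub 0 (by norm_num) (1/2) (by norm_num)) (hsub (1/2) (by norm_num) 1 (by norm_num))]
    have h1 : ∫ x in (0:ℝ)..(1/2), g x = ∫ x in (0:ℝ)..(1/2), g (1 - x) := by
      rw [intervalIntegral.integral_of_le (by norm_num),
        intervalIntegral.integral_of_le (by norm_num)]
      refine setIntegral_congr_fun measurableSet_Ioc fun x hx => ?_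
      simp only [hg]
      rw [hθsym x ⟨hx.1, by linarith [hx.2]⟩]
    rw [h1, intervalIntegral.integral_comp_sub_left, sub_zero,
      show (1:ℝ) - 1/2 = 1/2 by norm_num, two_mul]
  rw [hI]
  nlinarith [hfinal]
end

section
/- Let θ(s,t) = (s − t)/(log s − log t) (the logarithmic mean) for s, t > 0 with s ≠ t, and let the two-point curvature be κ(p₁,p₂) = (1/2)( ∂θ/∂s − ∂θ/∂t )(p₁,p₂) · (log p₁ − log p₂) + θ(p₁,p₂) · (1/p₁ + 1/p₂). Then for all p₁, p₂ > 0 with p₁ ≠ p₂: κ(p₁,p₂) = 1 + (p₁² − p₂²) / ( 2 (log p₁ − log p₂) p₁ p₂ ); moreover, if in addition p₁ + p₂ = 1 then κ(p₁,p₂) ≥ 2. -/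
/-!
With `L = log p₁ - log p₂ ≠ 0`, the quotient rule gives
`∂θ/∂s = 1/L - (p₁ - p₂)/(p₁ L²)` and `∂θ/∂t = -1/L + (p₁ - p₂)/(p₂ L²)`; substituting these yields
the closed form of `κ`. Since `(p₁² - p₂²)/(2 p₁ p₂) = sinh L`, that closed form reads
`κ = 1 + sinh L / L`, and the bound `κ ≥ 2` is the inequality `sinh L / L ≥ 1`. The bound thus holds
for all distinct positive `p₁, p₂`, whether or not they sum to `1`.
-/

/-- The logarithmic mean `θ(s,t) = (s − t)/(log s − log t)`. -/
noncomputable def thetaLog (s t : ℝ) : ℝ := (s - t) / (Real.log s - Real.log t)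

lemma one_le_sinh_div_self {x : ℝ} (hx : x ≠ 0) : 1 ≤ Real.sinh x / x := by
  rcases lt_or_gt_of_ne hx with h | h
  · rw [one_le_div_of_neg h]
    exact Real.sinh_le_self_iff.2 h.le
  · rw [one_le_div h]
    exact Real.self_le_sinh_iff.2 h.le

lemma sinh_log_sub_log {p q : ℝ} (hp : 0 < p) (hq : 0 < q) :
    Real.sinh (Real.log p - Real.log q) = (p ^ 2 - q ^ 2) / (2 * p * q) := by
  rw [← Real.log_div hp.ne' hq.ne', Real.sinh_log (div_pos hp hq)]
  field_simp

lemma hasDerivAt_thetaLog_left {p q : ℝ} (hp : p ≠ 0) (hL : Real.log p - Real.log q ≠ 0) :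
    HasDerivAt (fun s => thetaLog s q)
      ((1 * (Real.log p - Real.log q) - (p - q) * p⁻¹) / (Real.log p - Real.log q) ^ 2) p :=
  ((hasDerivAt_id p).sub_const q).fun_div ((Real.hasDerivAt_log hp).sub_const _) hL

lemma hasDerivAt_thetaLog_right {p q : ℝ} (hq : q ≠ 0) (hL : Real.log p - Real.log q ≠ 0) :
    HasDerivAt (fun t => thetaLog p t)
      ((-1 * (Real.log p - Real.log q) - (p - q) * -q⁻¹) / (Real.log p - Real.log q) ^ 2) q :=
  ((hasDerivAt_id q).const_sub p).fun_div ((Real.hasDerivAt_log hq).const_sub _) hL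

/-- for the logarithmic mean and the negative Boltzmann–Shannon entropy on `K₂`,
the curvature `κ(p₁,p₂) = (1/2)(∂θ/∂s − ∂θ/∂t)(log p₁ − log p₂) + θ(p₁,p₂)(1/p₁ + 1/p₂)`
equals `1 + (p₁² − p₂²)/(2(log p₁ − log p₂)p₁p₂)`; moreover if `p₁ + p₂ = 1` then `κ ≥ 2`. -/
theorem stmt12 (p₁ p₂ : ℝ) (h1 : 0 < p₁) (h2 : 0 < p₂) (hne : p₁ ≠ p₂) :
    ((1/2) * (deriv (fun s => thetaLog s p₂) p₁ - deriv (fun t => thetaLog p₁ t) p₂)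
        * (Real.log p₁ - Real.log p₂)
      + thetaLog p₁ p₂ * (1 / p₁ + 1 / p₂)
      = 1 + (p₁^2 - p₂^2) / (2 * (Real.log p₁ - Real.log p₂) * p₁ * p₂))
    ∧ (p₁ + p₂ = 1 →
      2 ≤ (1/2) * (deriv (fun s => thetaLog s p₂) p₁ - deriv (fun t => thetaLog p₁ t) p₂)
            * (Real.log p₁ - Real.log p₂)
          + thetaLog p₁ p₂ * (1 / p₁ + 1 / p₂)) := by
  have hL : Real.log p₁ - Real.log p₂ ≠ 0 :=
    sub_ne_zero.2 fun h => hne (Real.log_injOn_pos h1 h2 h)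
  have key : (1/2) * (deriv (fun s => thetaLog s p₂) p₁ - deriv (fun t => thetaLog p₁ t) p₂)
        * (Real.log p₁ - Real.log p₂)
      + thetaLog p₁ p₂ * (1 / p₁ + 1 / p₂)
      = 1 + (p₁^2 - p₂^2) / (2 * (Real.log p₁ - Real.log p₂) * p₁ * p₂) := by
    rw [(hasDerivAt_thetaLog_left h1.ne' hL).deriv, (hasDerivAt_thetaLog_right h2.ne' hL).deriv,
      thetaLog]
    generalize Real.log p₁ - Real.log p₂ = L at hL ⊢
    field_simp
    ring
  refine ⟨key, fun _ => ?_⟩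
  have hsinh := one_le_sinh_div_self hL
  rw [sinh_log_sub_log h1 h2, div_div,
    show 2 * p₁ * p₂ * (Real.log p₁ - Real.log p₂)
      = 2 * (Real.log p₁ - Real.log p₂) * p₁ * p₂ by ring] at hsinh
  rw [key]
  linarith
end

section
/- Assume θ is C¹ on (0,∞)², positive, positively homogeneous of degree one (θ(λs,λt) = λθ(s,t) for all λ > 0), and concave. Let C₄ be the 4-cycle with vertices {1,2,3,4} and edges {12, 23, 34, 41}. Then for every p ∈ (0,∞)⁴ and every f ∈ ℝ⁴: Γ₂^{C₄}(p,f,f) ≥ Γ₂^{12}(p,f,f) + Γ₂^{23}(p,f,f) + Γ₂^{34}(p,f,f) + Γ₂^{41}(p,f,f). -/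
/-!
On edges `η_{ij} = p_i - p_j`, so `Γ₂` becomes an explicit quadratic form in the differences
`f_i - f_j`. For an edge, say `01`, Euler's identity for the 1-homogeneous `θ` shows that the
coefficient of `(f_0 - f_1)²` exceeds the one of the single-edge form by
`½ (∂₁θ(p_0,p_1) p_3 + ∂₂θ(p_0,p_1) p_2 + θ_{01} + θ_{12} + θ_{30})`.
Concavity and homogeneity make `θ` superadditive, hence
`∂₁θ(a,b) c + ∂₂θ(a,b) d ≥ θ(c,d)` (`thetaU_supergradient`), and the excess is at least `S / 2` with
`S = θ_{01} + θ_{12} + θ_{23} + θ_{30}`. The two diagonals each contribute `-S / 2`, so the claim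
follows from the quadrilateral inequality: the sum of the squared sides minus the
sum of the squared diagonals is `(f_0 - f_1 + f_2 - f_3)² ≥ 0`.
-/


open Finset

/-- The weight function built from `U`: `θ(s,t) = (s−t)/(U'(s)−U'(t))` for `s ≠ t`,
and `θ(s,s) = 1/U''(s)`. -/
noncomputable def thetaU (U : ℝ → ℝ) (s t : ℝ) : ℝ :=
  if s = t then 1 / deriv (deriv U) s else (s - t) / (deriv U s - deriv U t)

/-- The entropy energy `E(p) = Σ_v U(p_v)`. -/
noncomputable def EnU {V : Type*} [Fintype V] (U : ℝ → ℝ) (p : V → ℝ) : ℝ := ∑ v, U (p v)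

/-- `Γ₂^{uv}(p,f,f)`, the single-edge contribution for the edge `uv`. -/
noncomputable def Gamma2edge {V : Type*} [Fintype V] [DecidableEq V] (A : V → V → Prop)
    [DecidableRel A] (θ : ℝ → ℝ → ℝ) (E : (V → ℝ) → ℝ) (p f : V → ℝ) (u v : V) : ℝ :=
  (f u - f v)^2 *
    (-(1/2) * (pd (fun q => thM A θ q u v) u p - pd (fun q => thM A θ q u v) v p)
        * etaM A θ E p u v
      + (pd (fun q => etaM A θ E q u v) u p - pd (fun q => etaM A θ E q u v) v p)
        * thM A θ p u v)

/-- The 4-cycle `C₄` with vertices `0,1,2,3` in cyclic order. -/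
def C4adj : Fin 4 → Fin 4 → Prop := fun i j => j = i + 1 ∨ i = j + 1

instance : DecidableRel C4adj := fun i j =>
  inferInstanceAs (Decidable (j = i + 1 ∨ i = j + 1))

/-- The partial derivative of `thetaU U` in its first argument. By symmetry of `thetaU U`, its
partial derivative in the second argument at `(s, t)` is `dTheta U t s`. -/
noncomputable def dTheta (U : ℝ → ℝ) (s t : ℝ) : ℝ := deriv (fun x => thetaU U x t) s

lemma thetaU_symm (U : ℝ → ℝ) (s t : ℝ) : thetaU U s t = thetaU U t s := by
  unfold thetaU
  by_cases h : s = t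
  · subst h; rfl
  · rw [if_neg h, if_neg (Ne.symm h), ← neg_sub t s, ← neg_sub (deriv U t), neg_div_neg_eq]

lemma thetaU_mul_deriv_sub (U : ℝ → ℝ) (s t : ℝ) (h0 : 0 < thetaU U s t) :
    thetaU U s t * (deriv U s - deriv U t) = s - t := by
  by_cases h : s = t
  · subst h; simp
  · have e : thetaU U s t = (s - t) / (deriv U s - deriv U t) := by simp [thetaU, h]
    -- positivity of the quotient excludes the junk value at a zero denominator
    have hne : deriv U s - deriv U t ≠ 0 := by
      intro h1
      rw [e, h1, div_zero] at h0
      exact lt_irrefl _ h0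
    rw [e, div_mul_cancel₀ _ hne]

lemma pd_EnU {V : Type*} [Fintype V] [DecidableEq V] (U : ℝ → ℝ) (p : V → ℝ) (i : V) :
    pd (EnU U) i p = deriv U (p i) := by
  unfold pd EnU
  have : (fun s => ∑ v, U (Function.update p i s v))
      = fun s => U s + ∑ v ∈ univ.erase i, U (p v) := by
    funext s
    rw [← Finset.add_sum_erase _ _ (mem_univ i), Function.update_self]
    congr 1
    refine Finset.sum_congr rfl fun v hv => ?_
    rw [Function.update_of_ne (ne_of_mem_erase hv)]
  rw [this, deriv_add_const]

lemma etaM_eq {V : Type*} [Fintype V] [DecidableEq V] (A : V → V → Prop) [DecidableRel A]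
    (U : ℝ → ℝ) (hθpos : ∀ s t : ℝ, 0 < s → 0 < t → 0 < thetaU U s t)
    (p : V → ℝ) (i j : V) (hi : 0 < p i) (hj : 0 < p j) :
    etaM A (thetaU U) (EnU U) p i j = if A i j then p i - p j else 0 := by
  unfold etaM thM
  rw [pd_EnU, pd_EnU]
  split_ifs
  · exact thetaU_mul_deriv_sub U _ _ (hθpos _ _ hi hj)
  · simp

lemma pd_etaM_left {V : Type*} [Fintype V] [DecidableEq V] (A : V → V → Prop) [DecidableRel A]
    (hA : ∀ i, ¬ A i i)
    (U : ℝ → ℝ) (hθpos : ∀ s t : ℝ, 0 < s → 0 < t → 0 < thetaU U s t)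
    (p : V → ℝ) (hp : ∀ i, 0 < p i) (i j : V) :
    pd (fun q => etaM A (thetaU U) (EnU U) q i j) i p = if A i j then 1 else 0 := by
  unfold pd
  split_ifs with h
  · have hij : j ≠ i := by rintro rfl; exact hA _ h
    have : (fun s => etaM A (thetaU U) (EnU U) (Function.update p i s) i j)
        =ᶠ[nhds (p i)] fun s => s - p j := by
      filter_upwards [Ioi_mem_nhds (hp i)] with s hs
      rw [etaM_eq A U hθpos _ i j (by simpa using hs) (by simpa [hij] using hp j), if_pos h]
      simp [hij]
    rw [this.deriv_eq]
    simp
  · simp [etaM, thM, h]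

lemma pd_etaM_right {V : Type*} [Fintype V] [DecidableEq V] (A : V → V → Prop) [DecidableRel A]
    (hA : ∀ i, ¬ A i i)
    (U : ℝ → ℝ) (hθpos : ∀ s t : ℝ, 0 < s → 0 < t → 0 < thetaU U s t)
    (p : V → ℝ) (hp : ∀ i, 0 < p i) (i j : V) :
    pd (fun q => etaM A (thetaU U) (EnU U) q i j) j p = if A i j then -1 else 0 := by
  unfold pd
  split_ifs with h
  · have hij : i ≠ j := by rintro rfl; exact hA _ h
    have : (fun s => etaM A (thetaU U) (EnU U) (Function.update p j s) i j)
        =ᶠ[nhds (p j)] fun s => p i - s := by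
      filter_upwards [Ioi_mem_nhds (hp j)] with s hs
      rw [etaM_eq A U hθpos _ i j (by simpa [hij] using hp i) (by simpa using hs), if_pos h]
      simp [hij]
    rw [this.deriv_eq]
    simp
  · simp [etaM, thM, h]

lemma pd_thM_left {V : Type*} [DecidableEq V] (A : V → V → Prop) [DecidableRel A]
    (hA : ∀ i, ¬ A i i) (U : ℝ → ℝ) (p : V → ℝ) (i j : V) :
    pd (fun q => thM A (thetaU U) q i j) i p = if A i j then dTheta U (p i) (p j) else 0 := by
  unfold pd thM dTheta
  split_ifs with h
  · have hij : j ≠ i := by rintro rfl; exact hA _ h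
    simp [hij]
  · simp

lemma pd_thM_right {V : Type*} [DecidableEq V] (A : V → V → Prop) [DecidableRel A]
    (hA : ∀ i, ¬ A i i) (U : ℝ → ℝ) (p : V → ℝ) (i j : V) :
    pd (fun q => thM A (thetaU U) q i j) j p = if A i j then dTheta U (p j) (p i) else 0 := by
  unfold pd thM dTheta
  split_ifs with h
  · have hij : i ≠ j := by rintro rfl; exact hA _ h
    simp only [Function.update_self, Function.update_of_ne hij]
    congr 1
    funext x
    exact thetaU_symm U _ _
  · simp

/-- The directional derivative of `θ` at `(a, b)` along `(c, d)`, written through `dTheta`. -/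
lemma thetaU_hasDerivAt (U : ℝ → ℝ)
    (hθC1 : ContDiffOn ℝ 1 (Function.uncurry (thetaU U)) {q : ℝ × ℝ | 0 < q.1 ∧ 0 < q.2})
    (a b c d : ℝ) (ha : 0 < a) (hb : 0 < b) :
    HasDerivAt (fun t : ℝ => thetaU U (a + t * c) (b + t * d))
      (dTheta U a b * c + dTheta U b a * d) 0 := by
  have hopen : IsOpen {q : ℝ × ℝ | 0 < q.1 ∧ 0 < q.2} :=
    (isOpen_lt continuous_const continuous_fst).inter (isOpen_lt continuous_const continuous_snd)
  have hd : DifferentiableAt ℝ (Function.uncurry (thetaU U)) (a, b) :=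
    (hθC1.differentiableOn one_ne_zero).differentiableAt (hopen.mem_nhds ⟨ha, hb⟩)
  obtain ⟨L, hL⟩ := hd
  have h1 : dTheta U a b = L (1, 0) := by
    have h := hL.comp_hasDerivAt a ((hasDerivAt_id a).prodMk (hasDerivAt_const a b))
    exact h.deriv
  have h2 : dTheta U b a = L (0, 1) := by
    have h := hL.comp_hasDerivAt b ((hasDerivAt_const b a).prodMk (hasDerivAt_id b))
    unfold dTheta
    rw [← h.deriv]
    congr 1
    funext x
    exact thetaU_symm U x a
  have hline : HasDerivAt (fun t : ℝ => (a + t * c, b + t * d)) (c, d) 0 := by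
    have e1 : HasDerivAt (fun t : ℝ => a + t * c) c 0 := by
      simpa using ((hasDerivAt_id (0 : ℝ)).mul_const c).const_add a
    have e2 : HasDerivAt (fun t : ℝ => b + t * d) d 0 := by
      simpa using ((hasDerivAt_id (0 : ℝ)).mul_const d).const_add b
    exact e1.prodMk e2
  have hL' : HasFDerivAt (Function.uncurry (thetaU U)) L (a + 0 * c, b + 0 * d) := by
    simpa using hL
  have h := HasFDerivAt.comp_hasDerivAt (0 : ℝ) hL' hline
  have e : L (c, d) = dTheta U a b * c + dTheta U b a * d := by
    rw [h1, h2]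
    have : ((c, d) : ℝ × ℝ) = c • ((1, 0) : ℝ × ℝ) + d • ((0, 1) : ℝ × ℝ) := by simp
    rw [this, map_add, map_smul, map_smul, smul_eq_mul, smul_eq_mul]
    ring
  rw [← e]
  exact h

/-- Euler's identity for the 1-homogeneous function `θ`. -/
lemma thetaU_euler (U : ℝ → ℝ)
    (hθC1 : ContDiffOn ℝ 1 (Function.uncurry (thetaU U)) {q : ℝ × ℝ | 0 < q.1 ∧ 0 < q.2})
    (hθhom : ∀ lam : ℝ, 0 < lam → ∀ s t : ℝ, 0 < s → 0 < t →
        thetaU U (lam * s) (lam * t) = lam * thetaU U s t)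
    (a b : ℝ) (ha : 0 < a) (hb : 0 < b) :
    dTheta U a b * a + dTheta U b a * b = thetaU U a b := by
  have h := thetaU_hasDerivAt U hθC1 a b a b ha hb
  have h' : HasDerivAt (fun t : ℝ => (1 + t) * thetaU U a b) (thetaU U a b) 0 := by
    simpa using ((hasDerivAt_id (0 : ℝ)).const_add 1).mul_const (thetaU U a b)
  refine h.unique (h'.congr_of_eventuallyEq ?_)
  filter_upwards [Ioi_mem_nhds (show (-1 : ℝ) < 0 by norm_num)] with t ht
  rw [← hθhom (1 + t) (by linarith [Set.mem_Ioi.mp ht]) a b ha hb]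
  congr 1 <;> ring

/-- The differential of `θ` at any point dominates `θ`: concavity and 1-homogeneity give
`θ(a + tc, b + td) ≥ θ(a, b) + t θ(c, d)` for `t > 0`, and `t → 0⁺` yields the claim. -/
lemma thetaU_supergradient (U : ℝ → ℝ)
    (hθC1 : ContDiffOn ℝ 1 (Function.uncurry (thetaU U)) {q : ℝ × ℝ | 0 < q.1 ∧ 0 < q.2})
    (hθhom : ∀ lam : ℝ, 0 < lam → ∀ s t : ℝ, 0 < s → 0 < t →
        thetaU U (lam * s) (lam * t) = lam * thetaU U s t)
    (hθconc : ConcaveOn ℝ {q : ℝ × ℝ | 0 < q.1 ∧ 0 < q.2} (Function.uncurry (thetaU U)))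
    (a b c d : ℝ) (ha : 0 < a) (hb : 0 < b) (hc : 0 < c) (hd : 0 < d) :
    thetaU U c d ≤ dTheta U a b * c + dTheta U b a * d := by
  have h := (thetaU_hasDerivAt U hθC1 a b c d ha hb).tendsto_slope_zero_right
  refine ge_of_tendsto h ?_
  filter_upwards [self_mem_nhdsWithin] with t ht
  have ht : 0 < t := ht
  -- the midpoint of `2(a, b)` and `2t(c, d)` is `(a + tc, b + td)`
  have hmid := hθconc.2 (x := (2 * a, 2 * b)) (y := ((2 * t) * c, (2 * t) * d))
    ⟨by positivity, by positivity⟩ ⟨by positivity, by positivity⟩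
    (show (0 : ℝ) ≤ 1 / 2 by norm_num) (show (0 : ℝ) ≤ 1 / 2 by norm_num) (by norm_num)
  simp only [Function.uncurry, Prod.smul_mk, Prod.mk_add_mk, smul_eq_mul] at hmid
  rw [hθhom 2 two_pos a b ha hb, hθhom (2 * t) (by positivity) c d hc hd,
    show 1 / 2 * (2 * a) + 1 / 2 * (2 * t * c) = a + t * c by ring,
    show 1 / 2 * (2 * b) + 1 / 2 * (2 * t * d) = b + t * d by ring] at hmid
  simp only [zero_add, zero_mul, add_zero, smul_eq_mul]
  rw [inv_mul_eq_div, le_div_iff₀ ht]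
  linarith

/-- if `θ = thetaU U` is C¹, positive, positively 1-homogeneous and concave on
`(0,∞)²`, then `θ` has the `C₄`-property with respect to `E(p) = Σ U(p_v)`:
`Γ₂^{C₄}(p,f,f) ≥ Γ₂^{12} + Γ₂^{23} + Γ₂^{34} + Γ₂^{41}`. -/
theorem stmt14 (U : ℝ → ℝ)
    (hU : ContDiffOn ℝ 3 U (Set.Ioi 0))
    (hU'' : ∀ s : ℝ, 0 < s → 0 < deriv (deriv U) s)
    (hθC1 : ContDiffOn ℝ 1 (Function.uncurry (thetaU U)) {q : ℝ × ℝ | 0 < q.1 ∧ 0 < q.2})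
    (hθpos : ∀ s t : ℝ, 0 < s → 0 < t → 0 < thetaU U s t)
    (hθhom : ∀ lam : ℝ, 0 < lam → ∀ s t : ℝ, 0 < s → 0 < t →
        thetaU U (lam * s) (lam * t) = lam * thetaU U s t)
    (hθconc : ConcaveOn ℝ {q : ℝ × ℝ | 0 < q.1 ∧ 0 < q.2} (Function.uncurry (thetaU U)))
    (p : Fin 4 → ℝ) (hp : ∀ i, 0 < p i) (f : Fin 4 → ℝ) :
    Gamma2edge C4adj (thetaU U) (EnU U) p f 0 1
      + Gamma2edge C4adj (thetaU U) (EnU U) p f 1 2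
      + Gamma2edge C4adj (thetaU U) (EnU U) p f 2 3
      + Gamma2edge C4adj (thetaU U) (EnU U) p f 3 0
      ≤ Gamma2 C4adj (thetaU U) (EnU U) p f := by
  have hA : ∀ i, ¬ C4adj i i := by decide
  have key := thetaU_supergradient U hθC1 hθhom hθconc
  have euler := thetaU_euler U hθC1 hθhom
  have sym := thetaU_symm U
  have heta : ∀ i j, etaM C4adj (thetaU U) (EnU U) p i j = if C4adj i j then p i - p j else 0 :=
    fun i j => etaM_eq C4adj U hθpos p i j (hp i) (hp j)
  unfold Gamma2edge Gamma2
  simp only [pd_thM_left C4adj hA, pd_thM_right C4adj hA, pd_etaM_left C4adj hA U hθpos p hp,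
    pd_etaM_right C4adj hA U hθpos p hp, heta]
  simp only [thM, Fin.sum_univ_four]
  have e01 : C4adj 0 1 := by decide
  have e10 : C4adj 1 0 := by decide
  have e12 : C4adj 1 2 := by decide
  have e21 : C4adj 2 1 := by decide
  have e23 : C4adj 2 3 := by decide
  have e32 : C4adj 3 2 := by decide
  have e30 : C4adj 3 0 := by decide
  have e03 : C4adj 0 3 := by decide
  have n02 : ¬ C4adj 0 2 := by decide
  have n20 : ¬ C4adj 2 0 := by decide
  have n13 : ¬ C4adj 1 3 := by decide
  have n31 : ¬ C4adj 3 1 := by decide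
  simp only [e01, e10, e12, e21, e23, e32, e30, e03, n02, n20, n13, n31, hA, if_true, if_false]
  rw [sym (p 1) (p 0), sym (p 2) (p 1), sym (p 3) (p 2), sym (p 0) (p 3)]
  have u01 := euler _ _ (hp 0) (hp 1)
  have u12 := euler _ _ (hp 1) (hp 2)
  have u23 := euler _ _ (hp 2) (hp 3)
  have u30 := euler _ _ (hp 3) (hp 0)
  -- each edge is compared with the opposite edge, traversed in the reverse direction
  have k01 := key _ _ _ _ (hp 0) (hp 1) (hp 3) (hp 2)
  have k12 := key _ _ _ _ (hp 1) (hp 2) (hp 0) (hp 3)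
  have k23 := key _ _ _ _ (hp 2) (hp 3) (hp 1) (hp 0)
  have k30 := key _ _ _ _ (hp 3) (hp 0) (hp 2) (hp 1)
  rw [sym (p 3) (p 2)] at k01
  rw [sym (p 0) (p 3)] at k12
  rw [sym (p 1) (p 0)] at k23
  rw [sym (p 2) (p 1)] at k30
  have t01 := hθpos _ _ (hp 0) (hp 1)
  have t12 := hθpos _ _ (hp 1) (hp 2)
  have t23 := hθpos _ _ (hp 2) (hp 3)
  have t30 := hθpos _ _ (hp 3) (hp 0)
  have m01 := mul_le_mul_of_nonneg_left k01 (sq_nonneg (f 0 - f 1))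
  have m12 := mul_le_mul_of_nonneg_left k12 (sq_nonneg (f 1 - f 2))
  have m23 := mul_le_mul_of_nonneg_left k23 (sq_nonneg (f 2 - f 3))
  have m30 := mul_le_mul_of_nonneg_left k30 (sq_nonneg (f 3 - f 0))
  have quad : 0 ≤ (thetaU U (p 0) (p 1) + thetaU U (p 1) (p 2) + thetaU U (p 2) (p 3)
      + thetaU U (p 3) (p 0)) * (f 0 - f 1 + f 2 - f 3) ^ 2 := by positivity
  linear_combination (1 / 2) * quad + (1 / 2) * (m01 + m12 + m23 + m30)
    + (1 / 2) * (f 0 - f 1) ^ 2 * u01 + (1 / 2) * (f 1 - f 2) ^ 2 * u12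
    + (1 / 2) * (f 2 - f 3) ^ 2 * u23 + (1 / 2) * (f 3 - f 0) ^ 2 * u30
end
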